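/- Let N ≥ 1 and s ∈ (0,1). Let A be an N×N real matrix and let w : ℝ^N → ℝ be smooth with compact support. Define the kernel ω_A(y,z) := (c_{N,s}/2) · [ 2·tr(A) − (N+2s) · ((A(y−z)) · (y−z)) / |y−z|² ] for y ≠ z. Then ∬_{ℝ^N×ℝ^N} (w(y) − w(z))² · |y−z|^{−N−2s} · ω_A(y,z) dy dz = −2 ∫_{ℝ^N} (∇w(y) · (Ay)) · (−Δ)^s w(y) dy, where the double integral is absolutely convergent. -/

import Mathlib

/-!
Let `D w (y) = ∇w(y) · Ay` be the derivative along the linear vector field `y ↦ Ay`, and let `f` be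
the integrand `(w(y) - w(z))² |y - z|^{-N-2s}`. The flow of the product field on `ℝ^N × ℝ^N` acts
on the difference `y - z` by the same linear flow, so it preserves the diagonal, and the derivative
of `f` along it is again an absolutely integrable expression
`g = 2 (w(y) - w(z)) (Dw(y) - Dw(z)) |y - z|^{-N-2s}`
`- (N + 2s) (w(y) - w(z))² |y - z|^{-N-2s-2} (A(y - z)) · (y - z)`.
The flow at time `t` scales Lebesgue measure by `exp (2 t tr A)`. Hence
`exp (2 t tr A) ∫ f ∘ flow_t` does not depend on `t`, and its derivative at `0` yields
`∫ g = -2 tr A ∫ f`: an integration by parts that needs no cut-off of the singularity. Finally, a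
translation and Fubini turn the bilinear form in `w` and `Dw` into the `L²` pairing of `Dw` with
the second-difference operator `(-Δ)^s w`.
-/

open MeasureTheory
open scoped RealInnerProductSpace

noncomputable section

/-- The normalizing constant `c_{N,s} = π^{-N/2} s 4^s Γ((N+2s)/2) / Γ(1-s)`. -/
def cNs (N : ℕ) (s : ℝ) : ℝ :=
  Real.pi ^ (-(N : ℝ) / 2) * s * (4 : ℝ) ^ s *
    Real.Gamma (((N : ℝ) + 2 * s) / 2) / Real.Gamma (1 - s)

/-- The fractional Laplacian, defined pointwise by
`(-Δ)^s u(x) = (c_{N,s}/2) ∫ (2u(x) - u(x+z) - u(x-z)) |z|^{-N-2s} dz`. -/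
def fracLap (N : ℕ) (s : ℝ) (u : EuclideanSpace ℝ (Fin N) → ℝ)
    (x : EuclideanSpace ℝ (Fin N)) : ℝ :=
  cNs N s / 2 * ∫ z : EuclideanSpace ℝ (Fin N),
    (2 * u x - u (x + z) - u (x - z)) * ‖z‖ ^ (-(N : ℝ) - 2 * s)

/-- The kernel `ω_A(y,z) = (c_{N,s}/2) [2 tr A - (N+2s) ⟨A(y-z), y-z⟩ / |y-z|²]`. -/
def omegaA (N : ℕ) (s : ℝ) (A : Matrix (Fin N) (Fin N) ℝ)
    (y z : EuclideanSpace ℝ (Fin N)) : ℝ :=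
  cNs N s / 2 * (2 * A.trace -
    ((N : ℝ) + 2 * s) * ⟪Matrix.toEuclideanLin A (y - z), y - z⟫ / ‖y - z‖ ^ 2)

section LinearFlow

variable {V W F : Type*} [NormedAddCommGroup V] [NormedSpace ℝ V]
  [NormedAddCommGroup W] [NormedSpace ℝ W] [NormedAddCommGroup F]

/-- The flow `exp (t L)` of the linear vector field `x ↦ L x`. -/
def linearFlow (L : V →L[ℝ] V) (t : ℝ) : V →L[ℝ] V :=
  NormedSpace.exp (t • L)

@[simp]
theorem linearFlow_zero (L : V →L[ℝ] V) : linearFlow L 0 = 1 := by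
  rw [linearFlow, zero_smul, NormedSpace.exp_zero]

theorem map_linearFlow_of_comp_eq_comp [CompleteSpace V] [CompleteSpace W] {L : V →L[ℝ] V}
    {M : W →L[ℝ] W} {T : V →L[ℝ] W} (h : T ∘L L = M ∘L T) (t : ℝ) (x : V) :
    T (linearFlow L t x) = linearFlow M t (T x) := by
  have hpow (n : ℕ) : T (((t • L) ^ n) x) = ((t • M) ^ n) (T x) := by
    induction n with
    | zero => rfl
    | succ n ih =>
      rw [pow_succ', pow_succ', mul_apply_eq_comp, mul_apply_eq_comp, ← ih]
      simpa using congr(t • $h (((t • L) ^ n) x))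
  have hL := (NormedSpace.exp_series_hasSum_exp' (𝕂 := ℝ) (t • L)).mapL
    (T ∘L ContinuousLinearMap.apply ℝ V x)
  have hM := (NormedSpace.exp_series_hasSum_exp' (𝕂 := ℝ) (t • M)).mapL
    (ContinuousLinearMap.apply ℝ W (T x))
  simp only [ContinuousLinearMap.comp_apply, map_smul, ContinuousLinearMap.apply_apply, hpow]
    at hL hM
  exact hL.unique hM

section CompleteSpace

variable [CompleteSpace V]

theorem linearFlow_add (L : V →L[ℝ] V) (s t : ℝ) :
    linearFlow L (s + t) = linearFlow L s ∘L linearFlow L t := by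
  let : NormedAlgebra ℚ (V →L[ℝ] V) := .restrictScalars ℚ ℝ _
  rw [linearFlow, add_smul]
  exact NormedSpace.exp_add_of_commute (((Commute.refl L).smul_left s).smul_right t)

theorem linearFlow_injective (L : V →L[ℝ] V) (t : ℝ) : Function.Injective (linearFlow L t) :=
  Function.LeftInverse.injective (g := linearFlow L (-t)) fun x => by
    rw [← ContinuousLinearMap.comp_apply, ← linearFlow_add, neg_add_cancel, linearFlow_zero]
    rfl

theorem hasDerivAt_linearFlow (L : V →L[ℝ] V) (t : ℝ) :
    HasDerivAt (linearFlow L) (L ∘L linearFlow L t) t :=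
  hasDerivAt_exp_smul_const' L t

theorem hasDerivAt_linearFlow_apply (L : V →L[ℝ] V) (x : V) (t : ℝ) :
    HasDerivAt (fun t => linearFlow L t x) (L (linearFlow L t x)) t := by
  simpa using (hasDerivAt_linearFlow L t).clm_apply (hasDerivAt_const t x)

theorem continuous_linearFlow (L : V →L[ℝ] V) : Continuous (linearFlow L) :=
  continuous_iff_continuousAt.2 fun t => (hasDerivAt_linearFlow L t).continuousAt

end CompleteSpace

variable [FiniteDimensional ℝ V]

theorem differentiable_det : Differentiable ℝ (fun A : V →L[ℝ] V => A.det) := by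
  let b := Module.finBasis ℝ V
  have hentry (i j) : Differentiable ℝ (fun A : V →L[ℝ] V => b.repr (A (b j)) i) :=
    (LinearMap.toContinuousLinearMap (b.coord i)).differentiable.comp
      (ContinuousLinearMap.apply ℝ V (b j)).differentiable
  simp_rw [ContinuousLinearMap.det, ← LinearMap.det_toMatrix b, Matrix.det_apply,
    LinearMap.toMatrix_apply, ContinuousLinearMap.coe_coe]
  fun_prop

theorem hasDerivAt_det_one_add_smul (L : V →L[ℝ] V) :
    HasDerivAt (fun t : ℝ => (1 + t • L).det) (LinearMap.trace ℝ V L) 0 := by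
  let b := Module.finBasis ℝ V
  let M := LinearMap.toMatrix b b (L : V →ₗ[ℝ] V)
  let Q : Polynomial ℝ :=
    (1 + (Polynomial.X : Polynomial ℝ) • M.map Polynomial.C).det.divX.divX
  have hdet (t : ℝ) : (1 + t • L).det = 1 + M.trace * t + Q.eval t * t ^ 2 := by
    rw [← Matrix.det_one_add_smul, ContinuousLinearMap.det, ← LinearMap.det_toMatrix b]
    simp [M, LinearMap.toMatrix_one]
  rw [funext hdet, LinearMap.trace_eq_matrix_trace ℝ b]
  simpa using (((hasDerivAt_id' (0 : ℝ)).const_mul M.trace).const_add 1).fun_add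
    ((Q.hasDerivAt 0).fun_mul (hasDerivAt_pow 2 (0 : ℝ)))

theorem fderiv_det_one_apply (L : V →L[ℝ] V) :
    fderiv ℝ (fun A : V →L[ℝ] V => A.det) 1 L = LinearMap.trace ℝ V L := by
  rw [← (differentiable_det 1).lineDeriv_eq_fderiv]
  exact (hasDerivAt_det_one_add_smul L).deriv

theorem hasDerivAt_det_linearFlow (L : V →L[ℝ] V) (t : ℝ) :
    HasDerivAt (fun t => (linearFlow L t).det)
      (LinearMap.trace ℝ V L * (linearFlow L t).det) t := by
  have := FiniteDimensional.complete ℝ V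
  have hzero : HasDerivAt (fun s => (linearFlow L s).det) (LinearMap.trace ℝ V L) 0 := by
    have hflow : HasDerivAt (linearFlow L) L 0 := by
      simpa [ContinuousLinearMap.one_def] using hasDerivAt_linearFlow L 0
    have hdet : HasFDerivAt (fun A : V →L[ℝ] V => A.det)
        (fderiv ℝ (fun A : V →L[ℝ] V => A.det) 1) (linearFlow L 0) := by
      simpa using (differentiable_det (V := V) 1).hasFDerivAt
    rw [← fderiv_det_one_apply]
    exact hdet.comp_hasDerivAt 0 hflow
  have hmul (s : ℝ) :
      (linearFlow L s).det = (linearFlow L (s - t)).det * (linearFlow L t).det := by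
    nth_rw 1 [← sub_add_cancel s t, linearFlow_add]
    exact LinearMap.det_comp _ _
  rw [funext hmul]
  rw [← sub_self t] at hzero
  exact (hzero.comp_sub_const t t).mul_const (linearFlow L t).det

theorem det_linearFlow (L : V →L[ℝ] V) (t : ℝ) :
    (linearFlow L t).det = Real.exp (t * LinearMap.trace ℝ V L) := by
  set T := LinearMap.trace ℝ V L
  have hderiv (t : ℝ) : HasDerivAt (fun t => (linearFlow L t).det * Real.exp (-(t * T))) 0 t := by
    convert! (hasDerivAt_det_linearFlow L t).mul ((hasDerivAt_mul_const T).neg.exp) using 1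
    simp only [Pi.neg_apply]
    ring
  have hconst := is_const_of_deriv_eq_zero (fun t => (hderiv t).differentiableAt)
    (fun t => (hderiv t).deriv) t 0
  rw [Real.exp_neg, ← div_eq_mul_inv, div_eq_iff (Real.exp_ne_zero _)] at hconst
  simpa [ContinuousLinearMap.det] using hconst

variable [MeasurableSpace V] [BorelSpace V] (μ : Measure V) [μ.IsAddHaarMeasure]

theorem measurableEmbedding_linearFlow (L : V →L[ℝ] V) (t : ℝ) :
    MeasurableEmbedding (linearFlow L t) :=
  have := FiniteDimensional.complete ℝ V
  (LinearMap.isClosedEmbedding_of_injective (f := (linearFlow L t : V →ₗ[ℝ] V))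
    (LinearMap.ker_eq_bot.2 (linearFlow_injective L t))).measurableEmbedding

theorem map_linearFlow_addHaar (L : V →L[ℝ] V) (t : ℝ) :
    μ.map (linearFlow L t) = ENNReal.ofReal (Real.exp (-(t * LinearMap.trace ℝ V L))) • μ := by
  have hdet : LinearMap.det (linearFlow L t : V →ₗ[ℝ] V) = _ := det_linearFlow L t
  have hmap := Measure.map_linearMap_addHaar_eq_smul_addHaar μ (f := (linearFlow L t : V →ₗ[ℝ] V))
    (hdet ▸ Real.exp_ne_zero _)
  rwa [hdet, ← Real.exp_neg, Real.abs_exp] at hmap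

variable {μ} in
theorem integrable_comp_linearFlow (L : V →L[ℝ] V) {f : V → F} (hf : Integrable f μ) (t : ℝ) :
    Integrable (fun x => f (linearFlow L t x)) μ := by
  refine (measurableEmbedding_linearFlow L t).integrable_map_iff.1 ?_
  rw [map_linearFlow_addHaar]
  exact hf.smul_measure ENNReal.ofReal_ne_top

variable [NormedSpace ℝ F]

theorem exp_smul_integral_comp_linearFlow (L : V →L[ℝ] V) (f : V → F) (t : ℝ) :
    Real.exp (t * LinearMap.trace ℝ V L) • ∫ x, f (linearFlow L t x) ∂μ = ∫ x, f x ∂μ := by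
  rw [← (measurableEmbedding_linearFlow L t).integral_map, map_linearFlow_addHaar,
    integral_smul_measure, ENNReal.toReal_ofReal (Real.exp_nonneg _), smul_smul, ← Real.exp_add,
    add_neg_cancel, Real.exp_zero, one_smul]

variable {μ}

theorem integrable_prod_exp_smul_comp_linearFlow (L : V →L[ℝ] V) {f : V → F}
    (hf : Integrable f μ) (ν : Measure ℝ) [IsFiniteMeasure ν] :
    Integrable (Function.uncurry fun t x =>
      Real.exp (t * LinearMap.trace ℝ V L) • f (linearFlow L t x)) (ν.prod μ) := by
  have := FiniteDimensional.complete ℝ V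
  set T := LinearMap.trace ℝ V L
  have hqmp : Measure.QuasiMeasurePreserving (fun p : ℝ × V => linearFlow L p.1 p.2)
      (ν.prod μ) μ := by
    refine QuasiMeasurePreserving.prod_of_right ?_
      (.of_forall fun t => ⟨(linearFlow L t).measurable, ?_⟩)
    · exact (((continuous_linearFlow L).comp continuous_fst).clm_apply continuous_snd).measurable
    · rw [map_linearFlow_addHaar]
      exact Measure.smul_absolutelyContinuous
  have hweight : Continuous fun p : ℝ × V => Real.exp (p.1 * T) := by fun_prop
  refine (integrable_prod_iff (hweight.aestronglyMeasurable.smul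
    (hf.aestronglyMeasurable.comp_quasiMeasurePreserving hqmp))).2
    ⟨.of_forall fun t => (integrable_comp_linearFlow L hf t).smul (Real.exp (t * T)), ?_⟩
  have hnorm (t : ℝ) : ∫ x, ‖Real.exp (t * T) • f (linearFlow L t x)‖ ∂μ = ∫ x, ‖f x‖ ∂μ := by
    simp_rw [norm_smul, Real.norm_of_nonneg (Real.exp_nonneg _), integral_const_mul]
    exact exp_smul_integral_comp_linearFlow μ L (‖f ·‖) t
  exact (integrable_const _).congr (.of_forall fun t => (hnorm t).symm)

theorem integral_eq_neg_trace_smul_integral_of_hasDerivAt_linearFlow [CompleteSpace F]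
    (L : V →L[ℝ] V) {f g : V → F} (hf : Integrable f μ) (hg : Integrable g μ)
    (hderiv : ∀ x t, HasDerivAt (fun t => f (linearFlow L t x)) (g (linearFlow L t x)) t) :
    ∫ x, g x ∂μ = -(LinearMap.trace ℝ V L • ∫ x, f x ∂μ) := by
  set T := LinearMap.trace ℝ V L
  set k : V → F := fun x => g x + T • f x
  have hk : Integrable k μ := hg.add (hf.smul T)
  have hweighted (x : V) (t : ℝ) : HasDerivAt (fun t => Real.exp (t * T) • f (linearFlow L t x))
      (Real.exp (t * T) • k (linearFlow L t x)) t := by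
    convert! (hasDerivAt_mul_const T).exp.smul (hderiv x t) using 1
    simp only [k, smul_add, smul_smul]
  have : IsFiniteMeasure (volume.restrict (Set.uIoc (0 : ℝ) 1)) := by
    rw [Set.uIoc]
    infer_instance
  have hint := integrable_prod_exp_smul_comp_linearFlow L hk (volume.restrict (Set.uIoc 0 1))
  have hftc : ∀ᵐ x ∂μ, ∫ t in (0 : ℝ)..1, Real.exp (t * T) • k (linearFlow L t x) =
      Real.exp (1 * T) • f (linearFlow L 1 x) - f x := by
    filter_upwards [hint.prod_left_ae] with x hx
    rw [intervalIntegral.integral_eq_sub_of_hasDerivAt (fun t _ => hweighted x t)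
      (intervalIntegrable_iff.2 hx)]
    simp
  have hzero : ∫ x, k x ∂μ = 0 :=
    calc ∫ x, k x ∂μ
        = ∫ t in (0 : ℝ)..1, ∫ x, Real.exp (t * T) • k (linearFlow L t x) ∂μ := by
          simp [integral_smul, T, exp_smul_integral_comp_linearFlow]
      _ = ∫ x, (Real.exp (1 * T) • f (linearFlow L 1 x) - f x) ∂μ := by
          rw [intervalIntegral_integral_swap hint, integral_congr_ae hftc]
      _ = 0 := by
          rw [integral_sub ((integrable_comp_linearFlow L hf 1).fun_smul _) hf, integral_smul,
            exp_smul_integral_comp_linearFlow, sub_self]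
  rwa [integral_add hg (hf.fun_smul T), integral_smul, add_eq_zero_iff_eq_neg] at hzero

end LinearFlow

section NonlocalForms

variable {E F : Type*} [NormedAddCommGroup E] [NormedAddCommGroup F]

/-- A Lévy density, of either sign: the class of kernels for which the forms below converge. -/
structure IsLevyDensity [MeasurableSpace E] (k : E → ℝ) (μ : Measure E) : Prop where
  measurable : Measurable k
  integrable : Integrable (fun h => min 1 ‖h‖ ^ 2 * k h) μ

/-- The integrand of the nonlocal bilinear form of `u` and `v` with kernel `k`. -/
def gagliardoDensity (k u v : E → ℝ) (p : E × E) : ℝ :=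
  (u p.1 - u p.2) * (v p.1 - v p.2) * k (p.1 - p.2)

/-- The centred second difference of `w` at `y` with step `h`, with the sign of `-Δ`. -/
def secondDiff (w : E → ℝ) (y h : E) : ℝ :=
  2 * w y - w (y + h) - w (y - h)

theorem IsLevyDensity.mul_bdd [MeasurableSpace E] {μ : Measure E} {k : E → ℝ}
    (hk : IsLevyDensity k μ) {b : E → ℝ} {C : ℝ} (hb : Measurable b)
    (hbC : ∀ h, |b h| ≤ C) : IsLevyDensity (fun h => k h * b h) μ where
  measurable := hk.measurable.mul hb
  integrable := by
    simpa only [mul_assoc] using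
      hk.integrable.mul_bdd hb.aestronglyMeasurable (.of_forall hbC)

theorem IsLevyDensity.const_mul [MeasurableSpace E] {μ : Measure E} {k : E → ℝ}
    (hk : IsLevyDensity k μ) (c : ℝ) : IsLevyDensity (fun h => c * k h) μ where
  measurable := hk.measurable.const_mul c
  integrable := by
    simpa only [mul_left_comm] using hk.integrable.const_mul c

theorem IsLevyDensity.add [MeasurableSpace E] {μ : Measure E} {k k' : E → ℝ}
    (hk : IsLevyDensity k μ) (hk' : IsLevyDensity k' μ) :
    IsLevyDensity (fun h => k h + k' h) μ where
  measurable := hk.measurable.add hk'.measurable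
  integrable := by
    simpa only [mul_add] using hk.integrable.fun_add hk'.integrable

theorem integral_sub_mul_sub_eq_integral_mul_secondDiff [MeasurableSpace E] [BorelSpace E]
    (μ : Measure E) [IsFiniteMeasureOnCompacts μ] [μ.IsAddLeftInvariant] {w v : E → ℝ}
    (hw : Continuous w) (hv : Continuous v) (hvc : HasCompactSupport v) (h : E) :
    ∫ z, (w (h + z) - w z) * (v (h + z) - v z) ∂μ = ∫ y, v y * secondDiff w y h ∂μ := by
  have hback : Integrable (fun y => v y * (w y - w (y - h))) μ :=
    Continuous.integrable_of_hasCompactSupport (by fun_prop) hvc.mul_right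
  have hforw : Integrable (fun y => v y * (w (h + y) - w y)) μ :=
    Continuous.integrable_of_hasCompactSupport (by fun_prop) hvc.mul_right
  calc ∫ z, (w (h + z) - w z) * (v (h + z) - v z) ∂μ
      = ∫ z, (v (h + z) * (w (h + z) - w (h + z - h)) - v z * (w (h + z) - w z)) ∂μ := by
        congr with z
        rw [add_sub_cancel_left]
        ring
    _ = (∫ y, v y * (w y - w (y - h)) ∂μ) - ∫ y, v y * (w (h + y) - w y) ∂μ := by
        rw [integral_sub (hback.comp_add_left h) hforw,
          integral_add_left_eq_self (fun y => v y * (w y - w (y - h))) h]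
    _ = ∫ y, v y * secondDiff w y h ∂μ := by
        rw [← integral_sub hback hforw]
        congr with y
        rw [secondDiff, add_comm h y]
        ring

variable [NormedSpace ℝ E] [NormedSpace ℝ F]

theorem exists_norm_sub_le_mul_min {f : E → F} (hf : ContDiff ℝ 1 f) (hfc : HasCompactSupport f) :
    ∃ C, 0 ≤ C ∧ ∀ x y, ‖f x - f y‖ ≤ C * min 1 ‖x - y‖ := by
  obtain ⟨K, hK⟩ := hf.lipschitzWith_of_hasCompactSupport hfc one_ne_zero
  obtain ⟨B, hB⟩ := hfc.exists_bound_of_continuous hf.continuous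
  refine ⟨max (2 * B) K, le_max_of_le_right K.2, fun x y => ?_⟩
  rcases le_total 1 ‖x - y‖ with hfar | hnear
  · rw [min_eq_left hfar, mul_one]
    refine le_max_of_le_left ((norm_sub_le _ _).trans ?_)
    linarith [hB x, hB y]
  · rw [min_eq_right hnear]
    refine (hK.norm_sub_le x y).trans ?_
    gcongr
    exact le_max_right _ _

theorem exists_abs_secondDiff_le_mul_min {w : E → ℝ} (hw : ContDiff ℝ 2 w)
    (hwc : HasCompactSupport w) :
    ∃ C, 0 ≤ C ∧ ∀ y h, |secondDiff w y h| ≤ C * min 1 ‖h‖ ^ 2 := by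
  obtain ⟨C₁, hC₁, hincr⟩ := exists_norm_sub_le_mul_min (hw.of_le one_le_two) hwc
  obtain ⟨C₂, hC₂, hincr'⟩ :=
    exists_norm_sub_le_mul_min (hw.fderiv_right (m := 1) le_rfl) (hwc.fderiv ℝ)
  refine ⟨max (2 * C₁) C₂, le_max_of_le_right hC₂, fun y h => ?_⟩
  have hfar : |secondDiff w y h| ≤ 2 * C₁ := by
    have hright := (hincr y (y + h)).trans (mul_le_of_le_one_right hC₁ (min_le_left _ _))
    have hleft := (hincr y (y - h)).trans (mul_le_of_le_one_right hC₁ (min_le_left _ _))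
    rw [Real.norm_eq_abs, abs_le] at hright hleft
    rw [secondDiff, abs_le]
    constructor <;> linarith
  have hnear : |secondDiff w y h| ≤ C₂ * ‖h‖ ^ 2 := by
    have hdiff : Differentiable ℝ w := hw.differentiable two_ne_zero
    have hderiv (x : E) : HasFDerivAt (fun x => w x - w (x + h))
        (fderiv ℝ w x - fderiv ℝ w (x + h)) x :=
      (hdiff x).hasFDerivAt.fun_sub ((hasFDerivAt_comp_add_right h).2 (hdiff (x + h)).hasFDerivAt)
    have hbound (x : E) : ‖fderiv ℝ w x - fderiv ℝ w (x + h)‖ ≤ C₂ * ‖h‖ := by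
      simpa using (hincr' x (x + h)).trans (mul_le_mul_of_nonneg_left (min_le_right _ _) hC₂)
    have hmvt := convex_univ.norm_image_sub_le_of_norm_hasFDerivWithin_le
      (fun x _ => (hderiv x).hasFDerivWithinAt) (fun x _ => hbound x)
      (Set.mem_univ (y - h)) (Set.mem_univ y)
    simp only [sub_add_cancel, sub_sub_cancel, Real.norm_eq_abs] at hmvt
    calc |secondDiff w y h| = |w y - w (y + h) - (w (y - h) - w y)| := by
          rw [secondDiff]; ring_nf
      _ ≤ C₂ * ‖h‖ ^ 2 := by rwa [sq, ← mul_assoc]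
  rcases le_total 1 ‖h‖ with hh | hh
  · rw [min_eq_left hh, one_pow, mul_one]
    exact hfar.trans (le_max_left _ _)
  · rw [min_eq_right hh]
    refine hnear.trans ?_
    gcongr
    exact le_max_right _ _

variable [FiniteDimensional ℝ E] [MeasurableSpace E] [BorelSpace E] {μ : Measure E}
  [μ.IsAddHaarMeasure]

theorem integrable_add_mul_comp_sub {χ m : E → ℝ} (hχ : Integrable χ μ) (hm : Integrable m μ) :
    Integrable (fun p : E × E => (χ p.1 + χ p.2) * m (p.1 - p.2)) (μ.prod μ) := by
  have hfst : Integrable (fun p : E × E => χ p.1 * m (p.1 - p.2)) (μ.prod μ) := by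
    simpa [Function.comp_def] using
      (hχ.convolution_integrand (ContinuousLinearMap.mul ℝ ℝ) hm.comp_neg).swap
  have hsnd : Integrable (fun p : E × E => χ p.2 * m (p.1 - p.2)) (μ.prod μ) :=
    hχ.convolution_integrand (ContinuousLinearMap.mul ℝ ℝ) hm
  simpa only [add_mul] using hfst.fun_add hsnd

namespace IsLevyDensity

variable {k : E → ℝ}

theorem integrable_gagliardoDensity (hk : IsLevyDensity k μ) {u v : E → ℝ}
    (hu : ContDiff ℝ 1 u) (huc : HasCompactSupport u) (hv : ContDiff ℝ 1 v)
    (hvc : HasCompactSupport v) : Integrable (gagliardoDensity k u v) (μ.prod μ) := by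
  obtain ⟨Cu, hCu, hincr_u⟩ := exists_norm_sub_le_mul_min hu huc
  obtain ⟨Cv, -, hincr_v⟩ := exists_norm_sub_le_mul_min hv hvc
  set m : E → ℝ := fun h => min 1 ‖h‖ ^ 2 * |k h|
  set χ : E → ℝ := (tsupport u).indicator 1
  have hm : Integrable m μ := by simpa [m, abs_mul] using hk.integrable.abs
  have hχ : Integrable χ μ :=
    (integrable_indicator_iff (isClosed_tsupport u).measurableSet).2
      (integrableOn_const huc.isCompact.measure_ne_top)
  have hχ_nonneg (x : E) : 0 ≤ χ x := Set.indicator_nonneg (fun _ _ => zero_le_one) x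
  have hχ_one {x : E} (hx : u x ≠ 0) : χ x = 1 := Set.indicator_of_mem (subset_tsupport u hx) 1
  have hsupp (p : E × E) : |u p.1 - u p.2| ≤ Cu * min 1 ‖p.1 - p.2‖ * (χ p.1 + χ p.2) := by
    by_cases hp : u p.1 = 0 ∧ u p.2 = 0
    · have hnonneg := add_nonneg (hχ_nonneg p.1) (hχ_nonneg p.2)
      rw [hp.1, hp.2, sub_zero, abs_zero]
      positivity
    · refine (hincr_u p.1 p.2).trans (le_mul_of_one_le_right (by positivity) ?_)
      rcases not_and_or.1 hp with hp | hp <;> linarith [hχ_nonneg p.1, hχ_nonneg p.2, hχ_one hp]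
  refine ((integrable_add_mul_comp_sub hχ hm).const_mul (Cu * Cv)).mono' ?_ (.of_forall fun p => ?_)
  · have := hu.continuous
    have := hv.continuous
    have hincr : Continuous fun p : E × E => (u p.1 - u p.2) * (v p.1 - v p.2) := by fun_prop
    exact (hincr.measurable.mul (hk.measurable.comp (by fun_prop))).aestronglyMeasurable
  · simp only [gagliardoDensity, Real.norm_eq_abs, abs_mul]
    calc |u p.1 - u p.2| * |v p.1 - v p.2| * |k (p.1 - p.2)|
        ≤ Cu * min 1 ‖p.1 - p.2‖ * (χ p.1 + χ p.2) * (Cv * min 1 ‖p.1 - p.2‖) *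
            |k (p.1 - p.2)| := by
          gcongr
          · exact (abs_nonneg _).trans (hsupp p)
          · exact hsupp p
          · exact hincr_v p.1 p.2
      _ = Cu * Cv * ((χ p.1 + χ p.2) * m (p.1 - p.2)) := by ring

theorem integrable_mul_secondDiff_mul (hk : IsLevyDensity k μ) {w v : E → ℝ}
    (hw : ContDiff ℝ 2 w) (hwc : HasCompactSupport w) (hv : Continuous v)
    (hvc : HasCompactSupport v) :
    Integrable (fun p : E × E => v p.2 * (secondDiff w p.2 p.1 * k p.1)) (μ.prod μ) := by
  obtain ⟨C, -, hbound⟩ := exists_abs_secondDiff_le_mul_min hw hwc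
  have hvi : Integrable v μ := hv.integrable_of_hasCompactSupport hvc
  have hwcont := hw.continuous
  refine ((hk.integrable.abs.const_mul C).mul_prod hvi.abs).mono' ?_ (.of_forall fun p => ?_)
  · have hdiff : Continuous fun p : E × E => secondDiff w p.2 p.1 := by
      unfold secondDiff
      fun_prop
    exact ((hv.measurable.comp measurable_snd).mul
      (hdiff.measurable.mul (hk.measurable.comp measurable_fst))).aestronglyMeasurable
  · calc ‖v p.2 * (secondDiff w p.2 p.1 * k p.1)‖
        = |secondDiff w p.2 p.1| * |k p.1| * |v p.2| := by
          rw [mul_comm, norm_mul, norm_mul]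
          rfl
      _ ≤ C * min 1 ‖p.1‖ ^ 2 * |k p.1| * |v p.2| := by
          gcongr
          exact hbound p.2 p.1
      _ = C * |min 1 ‖p.1‖ ^ 2 * k p.1| * |v p.2| := by
          rw [abs_mul, abs_of_nonneg (a := min 1 ‖p.1‖ ^ 2) (by positivity), mul_assoc C]

theorem integral_gagliardoDensity (hk : IsLevyDensity k μ) {w v : E → ℝ}
    (hw : ContDiff ℝ 2 w) (hwc : HasCompactSupport w) (hv : ContDiff ℝ 1 v)
    (hvc : HasCompactSupport v) :
    ∫ p, gagliardoDensity k w v p ∂(μ.prod μ) =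
      ∫ y, v y * ∫ h, secondDiff w y h * k h ∂μ ∂μ := by
  have hint := hk.integrable_gagliardoDensity (hw.of_le one_le_two) hwc hv hvc
  have hshear := measurePreserving_add_prod μ μ
  calc ∫ p, gagliardoDensity k w v p ∂(μ.prod μ)
      = ∫ p : E × E, gagliardoDensity k w v (p.1 + p.2, p.2) ∂(μ.prod μ) := by
        nth_rw 1 [← hshear.map_eq]
        exact integral_map hshear.aemeasurable
          (hshear.map_eq.symm ▸ hint.aestronglyMeasurable)
    _ = ∫ h, ∫ z, gagliardoDensity k w v (h + z, z) ∂μ ∂μ :=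
        integral_prod _ (hshear.integrable_comp_of_integrable hint)
    _ = ∫ h, ∫ y, v y * (secondDiff w y h * k h) ∂μ ∂μ := by
        simp_rw [gagliardoDensity, add_sub_cancel_right, ← mul_assoc, integral_mul_const,
          integral_sub_mul_sub_eq_integral_mul_secondDiff μ hw.continuous hv.continuous hvc]
    _ = ∫ y, ∫ h, v y * (secondDiff w y h * k h) ∂μ ∂μ :=
        integral_integral_swap (hk.integrable_mul_secondDiff_mul hw hwc hv.continuous hvc)
    _ = ∫ y, v y * ∫ h, secondDiff w y h * k h ∂μ ∂μ := by
        simp_rw [integral_const_mul]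

end IsLevyDensity

end NonlocalForms

section EnergyIdentity

variable {E : Type*} [NormedAddCommGroup E] [NormedSpace ℝ E]

/-- The derivative of `w` along the linear vector field `y ↦ L y`. -/
def derivAlong (L : E →L[ℝ] E) (w : E → ℝ) (y : E) : ℝ :=
  fderiv ℝ w y (L y)

theorem contDiff_derivAlong (L : E →L[ℝ] E) {w : E → ℝ} (hw : ContDiff ℝ 2 w) :
    ContDiff ℝ 1 (derivAlong L w) :=
  (hw.fderiv_right le_rfl).clm_apply L.contDiff

theorem hasCompactSupport_derivAlong (L : E →L[ℝ] E) {w : E → ℝ} (hwc : HasCompactSupport w) :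
    HasCompactSupport (derivAlong L w) :=
  (hwc.fderiv ℝ).mono' fun y hy => subset_tsupport _ fun h => hy (by simp [derivAlong, h])

theorem hasDerivAt_gagliardoDensity_linearFlow [CompleteSpace E] {L : E →L[ℝ] E}
    {k k' w : E → ℝ} (hderiv : ∀ h ≠ 0, ∀ t,
      HasDerivAt (fun t => k (linearFlow L t h)) (k' (linearFlow L t h)) t)
    (hw : Differentiable ℝ w) (p : E × E) (t : ℝ) :
    HasDerivAt (fun t => gagliardoDensity k w w (linearFlow (L.prodMap L) t p))
      (2 * gagliardoDensity k w (derivAlong L w) (linearFlow (L.prodMap L) t p) +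
        gagliardoDensity k' w w (linearFlow (L.prodMap L) t p)) t := by
  have hfst (t : ℝ) : (linearFlow (L.prodMap L) t p).1 = linearFlow L t p.1 :=
    map_linearFlow_of_comp_eq_comp (T := .fst ℝ E E) rfl t p
  have hsnd (t : ℝ) : (linearFlow (L.prodMap L) t p).2 = linearFlow L t p.2 :=
    map_linearFlow_of_comp_eq_comp (T := .snd ℝ E E) rfl t p
  simp only [gagliardoDensity, derivAlong, hfst, hsnd, ← map_sub]
  rcases eq_or_ne p.1 p.2 with heq | hne
  · simpa [heq] using hasDerivAt_const t (0 : ℝ)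
  · have halong (x : E) := (hw _).hasFDerivAt.comp_hasDerivAt t (hasDerivAt_linearFlow_apply L x t)
    have hincr := (halong p.1).fun_sub (halong p.2)
    convert! (hincr.fun_mul hincr).fun_mul (hderiv _ (sub_ne_zero.2 hne) t) using 1
    simp only [Function.comp_apply]
    ring

variable [FiniteDimensional ℝ E] [MeasurableSpace E] [BorelSpace E] {μ : Measure E}
  [μ.IsAddHaarMeasure]

theorem IsLevyDensity.integral_gagliardoDensity_eq_of_hasDerivAt_linearFlow {L : E →L[ℝ] E}
    {k k' : E → ℝ} (hk : IsLevyDensity k μ) (hk' : IsLevyDensity k' μ)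
    (hderiv : ∀ h ≠ 0, ∀ t,
      HasDerivAt (fun t => k (linearFlow L t h)) (k' (linearFlow L t h)) t)
    {w : E → ℝ} (hw : ContDiff ℝ 2 w) (hwc : HasCompactSupport w) :
    ∫ p, gagliardoDensity (fun h => 2 * LinearMap.trace ℝ E L * k h + k' h) w w p ∂(μ.prod μ) =
      -2 * ∫ y, derivAlong L w y * ∫ h, secondDiff w y h * k h ∂μ ∂μ := by
  have := FiniteDimensional.complete ℝ E
  have hw1 := hw.of_le one_le_two
  have hDw := contDiff_derivAlong L hw
  have hDwc := hasCompactSupport_derivAlong L hwc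
  have hint := hk.integrable_gagliardoDensity hw1 hwc hw1 hwc
  have hint' := hk'.integrable_gagliardoDensity hw1 hwc hw1 hwc
  have hintD := (hk.integrable_gagliardoDensity hw1 hwc hDw hDwc).const_mul 2
  have htrace : LinearMap.trace ℝ (E × E) (L.prodMap L) = 2 * LinearMap.trace ℝ E L := by
    rw [two_mul]
    exact LinearMap.trace_prodMap' _ _
  have hdiv := integral_eq_neg_trace_smul_integral_of_hasDerivAt_linearFlow (L.prodMap L) hint
    (hintD.fun_add hint')
    (hasDerivAt_gagliardoDensity_linearFlow hderiv (hw.differentiable two_ne_zero))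
  rw [integral_add hintD hint', integral_const_mul, htrace, smul_eq_mul,
    hk.integral_gagliardoDensity hw hwc hDw hDwc] at hdiv
  calc ∫ p, gagliardoDensity (fun h => 2 * LinearMap.trace ℝ E L * k h + k' h) w w p ∂(μ.prod μ)
      = ∫ p, (2 * LinearMap.trace ℝ E L * gagliardoDensity k w w p + gagliardoDensity k' w w p)
          ∂(μ.prod μ) := by
        congr with p
        simp only [gagliardoDensity]
        ring
    _ = 2 * LinearMap.trace ℝ E L * ∫ p, gagliardoDensity k w w p ∂(μ.prod μ) +
          ∫ p, gagliardoDensity k' w w p ∂(μ.prod μ) := by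
        rw [integral_add (hint.const_mul _) hint', integral_const_mul]
    _ = -2 * ∫ y, derivAlong L w y * ∫ h, secondDiff w y h * k h ∂μ ∂μ := by
        linarith

end EnergyIdentity

section PowerKernel

variable {E : Type*} [NormedAddCommGroup E]

theorem isLevyDensity_norm_rpow [NormedSpace ℝ E] [FiniteDimensional ℝ E] [Nontrivial E]
    [MeasurableSpace E] [BorelSpace E] (μ : Measure E) [μ.IsAddHaarMeasure] {q : ℝ}
    (hq : -(Module.finrank ℝ E : ℝ) - 2 < q) (hq' : q < -(Module.finrank ℝ E : ℝ)) :
    IsLevyDensity (fun h : E => ‖h‖ ^ q) μ where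
  measurable := by fun_prop
  integrable := by
    refine (integrable_fun_norm_addHaar μ (f := fun r : ℝ => min 1 r ^ 2 * r ^ q)).2 ?_
    set d := Module.finrank ℝ E
    have hd : ((d - 1 : ℕ) : ℝ) = d - 1 := by
      rw [Nat.cast_sub Module.finrank_pos, Nat.cast_one]
    have hradial {r : ℝ} (hr : 0 < r) : r ^ (d - 1) * r ^ q = r ^ (d - 1 + q) := by
      rw [← Real.rpow_natCast r (d - 1), ← Real.rpow_add hr, hd]
    rw [← Set.Ioc_union_Ioi_eq_Ioi zero_le_one]
    refine IntegrableOn.union ?_ ?_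
    · have hnear : IntegrableOn (fun r : ℝ => r ^ (d - 1 + q + 2)) (Set.Ioc 0 1) :=
        (intervalIntegrable_iff_integrableOn_Ioc_of_le zero_le_one).1
          (intervalIntegral.intervalIntegrable_rpow' (by linarith))
      refine hnear.congr_fun (fun r hr => ?_) measurableSet_Ioc
      dsimp only
      rw [min_eq_right hr.2, smul_eq_mul, mul_left_comm, hradial hr.1, Real.rpow_add hr.1,
        Real.rpow_two, mul_comm]
    · have hfar : IntegrableOn (fun r : ℝ => r ^ (d - 1 + q)) (Set.Ioi 1) :=
        integrableOn_Ioi_rpow_of_lt (by linarith) one_pos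
      refine hfar.congr_fun (fun r hr => ?_) measurableSet_Ioi
      dsimp only
      rw [min_eq_left (le_of_lt hr), one_pow, one_mul, smul_eq_mul, hradial (one_pos.trans hr)]

variable [InnerProductSpace ℝ E]

theorem hasDerivAt_norm_rpow_of_ne_zero {γ : ℝ → E} {γ' : E} {t : ℝ} (hγ : HasDerivAt γ γ' t)
    (hne : γ t ≠ 0) (q : ℝ) :
    HasDerivAt (fun t => ‖γ t‖ ^ q) (q * (‖γ t‖ ^ q * (⟪γ', γ t⟫ / ‖γ t‖ ^ 2))) t := by
  have hsq (x : E) : ‖x‖ ^ q = (‖x‖ ^ 2) ^ (q / 2) := by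
    rw [← Real.rpow_natCast_mul (norm_nonneg x)]
    congr 1
    push_cast
    ring
  have hpos : 0 < ‖γ t‖ ^ 2 := by positivity
  simp_rw [hsq]
  convert! hγ.norm_sq.rpow_const (p := q / 2) (Or.inl hpos.ne') using 1
  rw [Real.rpow_sub_one hpos.ne', real_inner_comm]
  ring

theorem abs_inner_map_div_norm_sq_le (L : E →L[ℝ] E) (h : E) : |⟪L h, h⟫ / ‖h‖ ^ 2| ≤ ‖L‖ := by
  rw [abs_div, abs_of_nonneg (sq_nonneg ‖h‖)]
  refine div_le_of_le_mul₀ (sq_nonneg _) (norm_nonneg L) ((abs_real_inner_le_norm _ _).trans ?_)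
  rw [sq, ← mul_assoc]
  gcongr
  exact L.le_opNorm h

theorem IsLevyDensity.mul_inner_map_div_norm_sq [MeasurableSpace E] [BorelSpace E] {μ : Measure E}
    {k : E → ℝ} (hk : IsLevyDensity k μ) (L : E →L[ℝ] E) :
    IsLevyDensity (fun h => k h * (⟪L h, h⟫ / ‖h‖ ^ 2)) μ := by
  have hinner : Continuous fun h => ⟪L h, h⟫ := by fun_prop
  exact hk.mul_bdd (hinner.measurable.div (by fun_prop)) (abs_inner_map_div_norm_sq_le L)

end PowerKernel

theorem trace_toEuclideanLin {n : Type*} [Fintype n] [DecidableEq n] (A : Matrix n n ℝ) :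
    LinearMap.trace ℝ (EuclideanSpace ℝ n) (Matrix.toEuclideanLin A) = A.trace := by
  rw [Matrix.toEuclideanLin_eq_toLin_orthonormal, Matrix.trace_toLin_eq]

theorem sq_sub_mul_norm_rpow_mul_omegaA (N : ℕ) (s : ℝ) (A : Matrix (Fin N) (Fin N) ℝ)
    (w : EuclideanSpace ℝ (Fin N) → ℝ)
    (p : EuclideanSpace ℝ (Fin N) × EuclideanSpace ℝ (Fin N)) :
    (w p.1 - w p.2) ^ 2 * ‖p.1 - p.2‖ ^ (-(N : ℝ) - 2 * s) * omegaA N s A p.1 p.2 =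
      cNs N s / 2 * gagliardoDensity (fun h => 2 * A.trace * ‖h‖ ^ (-(N : ℝ) - 2 * s) +
        (-(N : ℝ) - 2 * s) *
          (‖h‖ ^ (-(N : ℝ) - 2 * s) * (⟪Matrix.toEuclideanLin A h, h⟫ / ‖h‖ ^ 2))) w w p := by
  rw [gagliardoDensity, omegaA]
  ring

theorem statement11_general (N : ℕ) (hN : 1 ≤ N) (s : ℝ) (hs : s ∈ Set.Ioo (0 : ℝ) 1)
    (A : Matrix (Fin N) (Fin N) ℝ)
    (w : EuclideanSpace ℝ (Fin N) → ℝ)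
    (hw : ContDiff ℝ 2 w) (hwc : HasCompactSupport w) :
    Integrable (fun p : EuclideanSpace ℝ (Fin N) × EuclideanSpace ℝ (Fin N) =>
      (w p.1 - w p.2) ^ 2 * ‖p.1 - p.2‖ ^ (-(N : ℝ) - 2 * s) *
        omegaA N s A p.1 p.2) ∧
    (∫ p : EuclideanSpace ℝ (Fin N) × EuclideanSpace ℝ (Fin N),
      (w p.1 - w p.2) ^ 2 * ‖p.1 - p.2‖ ^ (-(N : ℝ) - 2 * s) *
        omegaA N s A p.1 p.2) =
      -2 * ∫ y : EuclideanSpace ℝ (Fin N),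
          ⟪gradient w y, Matrix.toEuclideanLin A y⟫ * fracLap N s w y := by
  have : Nonempty (Fin N) := ⟨⟨0, hN⟩⟩
  let L := LinearMap.toContinuousLinearMap (Matrix.toEuclideanLin A)
  have htrace : LinearMap.trace ℝ _ (L : EuclideanSpace ℝ (Fin N) →ₗ[ℝ] _) = A.trace :=
    trace_toEuclideanLin A
  have hk : IsLevyDensity (fun h : EuclideanSpace ℝ (Fin N) => ‖h‖ ^ (-(N : ℝ) - 2 * s)) volume :=
    isLevyDensity_norm_rpow volume (by rw [finrank_euclideanSpace_fin]; linarith [hs.2])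
      (by rw [finrank_euclideanSpace_fin]; linarith [hs.1])
  have hk' := (hk.mul_inner_map_div_norm_sq L).const_mul (-(N : ℝ) - 2 * s)
  have hw1 := hw.of_le one_le_two
  simp only [sq_sub_mul_norm_rpow_mul_omegaA]
  refine ⟨(((hk.const_mul (2 * A.trace)).add hk').integrable_gagliardoDensity
    hw1 hwc hw1 hwc).const_mul _, ?_⟩
  have henergy := hk.integral_gagliardoDensity_eq_of_hasDerivAt_linearFlow hk'
    (fun h hh t => hasDerivAt_norm_rpow_of_ne_zero (hasDerivAt_linearFlow_apply L h t)
      (by simpa using (linearFlow_injective L t).ne hh) _) hw hwc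
  rw [htrace] at henergy
  rw [integral_const_mul, Measure.volume_eq_prod]
  refine congr(_ * $henergy).trans ?_
  rw [mul_left_comm, ← integral_const_mul]
  congr with y
  rw [inner_gradient_left]
  exact mul_left_comm _ _ _

/-- `∬ (w(y)-w(z))² |y-z|^{-N-2s} ω_A(y,z) dy dz
  = -2 ∫ (∇w(y)·Ay)(-Δ)^s w(y) dy`, with the double integral absolutely convergent. -/
theorem statement11 (N : ℕ) (hN : 1 ≤ N) (s : ℝ) (hs : s ∈ Set.Ioo (0 : ℝ) 1)
    (A : Matrix (Fin N) (Fin N) ℝ)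
    (w : EuclideanSpace ℝ (Fin N) → ℝ)
    (hw : ContDiff ℝ (⊤ : ℕ∞) w) (hwc : HasCompactSupport w) :
    Integrable (fun p : EuclideanSpace ℝ (Fin N) × EuclideanSpace ℝ (Fin N) =>
      (w p.1 - w p.2) ^ 2 * ‖p.1 - p.2‖ ^ (-(N : ℝ) - 2 * s) *
        omegaA N s A p.1 p.2) ∧
    (∫ p : EuclideanSpace ℝ (Fin N) × EuclideanSpace ℝ (Fin N),
      (w p.1 - w p.2) ^ 2 * ‖p.1 - p.2‖ ^ (-(N : ℝ) - 2 * s) *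
        omegaA N s A p.1 p.2) =
      -2 * ∫ y : EuclideanSpace ℝ (Fin N),
          ⟪gradient w y, Matrix.toEuclideanLin A y⟫ * fracLap N s w y := by
  exact statement11_general N hN s hs A w (contDiff_infty.1 hw 2) hwc
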